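/- The performance of algorithm Revoke-Unit cannot be better than OPT − η: there exist an instance of interval selection with unit weights, a prediction assignment, and a maximum-cardinality feasible set OPT such that the solution produced by Revoke-Unit satisfies ALG = OPT − η, where η > 0 is the total prediction error relative to OPT. -/

import Mathlib

attribute [local instance] Classical.propDecidable

noncomputable section

/-- An interval `I = (s, f)` with `s < f`, occupying `[s, f)`. -/
structure Ivl where
  s : ℝ
  f : ℝ
  lt : s < f

namespace Ivl

/-- The set of points occupied by an interval: the half-open set `[s, f)`. -/
def occ (I : Ivl) : Set ℝ := Set.Ico I.s I.f

/-- The length of an interval, `f - s` (also its proportional weight). -/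
def len (I : Ivl) : ℝ := I.f - I.s

end Ivl

/-- Two intervals conflict if their occupied sets intersect. -/
def Conflict (I J : Ivl) : Prop := (I.occ ∩ J.occ).Nonempty

/-- A set of intervals is feasible if its elements are pairwise disjoint. -/
def Feasible (S : Finset Ivl) : Prop :=
  ∀ I ∈ S, ∀ J ∈ S, I ≠ J → ¬ Conflict I J

/-- `opt` is a maximum-cardinality feasible subset of the instance's intervals. -/
def IsMaxCardOpt (inst : List Ivl) (opt : Finset Ivl) : Prop :=
  (∀ I ∈ opt, I ∈ inst) ∧ Feasible opt ∧
    ∀ T : Finset Ivl, (∀ I ∈ T, I ∈ inst) → Feasible T → T.card ≤ opt.card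

/-- The prediction error introduced by interval `I`, relative to `opt`,
with weight function `w`. -/
def err (w : Ivl → ℝ) (opt : Finset Ivl) (Prd : Ivl → Bool) (I : Ivl) : ℝ :=
  if (Prd I = true ↔ I ∈ opt) then 0
  else if I ∈ opt then w I
  else (∑ J ∈ opt.filter (fun J => Conflict J I), w J) - w I

/-- The total prediction error of the instance relative to `opt`. -/
def totalErr (w : Ivl → ℝ) (opt : Finset Ivl) (Prd : Ivl → Bool)
    (inst : List Ivl) : ℝ :=
  (inst.map (err w opt Prd)).sum

/-- A conflict is partial if neither occupied set contains the other. -/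
def PartialConflict (I J : Ivl) : Prop :=
  Conflict I J ∧ ¬ I.occ ⊆ J.occ ∧ ¬ J.occ ⊆ I.occ

/-- One step of algorithm `Revoke-Unit` on state `(S, M)` (solution, marked)
upon the arrival of `I`. -/
def revokeUnitStep (Prd : Ivl → Bool) (st : Finset Ivl × Finset Ivl)
    (I : Ivl) : Finset Ivl × Finset Ivl :=
  let S := st.1
  let M := st.2
  let Is := S.filter (fun J => Conflict I J)
  if Is = ∅ then
    (insert I S, M)
  else if ∃ I', Is = {I'} ∧ I.occ ⊂ I'.occ then
    (insert I (S \ Is), if Is ∩ M = ∅ then M else insert I M)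
  else if (∀ J ∈ Is, PartialConflict I J) ∧ Prd I = true ∧ Is ∩ M = ∅ then
    (insert I (S \ Is), insert I M)
  else
    st

/-- The solution produced by algorithm `Revoke-Unit` on the instance `inst`
with predictions `Prd`. -/
def revokeUnit (Prd : Ivl → Bool) (inst : List Ivl) : Finset Ivl :=
  (inst.foldl (revokeUnitStep Prd) (∅, ∅)).1

/-!
Let `B` partially conflict with each of two disjoint intervals `A` and `C`, let them arrive in the
order `A`, `B`, `C`, and predict all three to be in the optimum `{A, C}`. Trusting its prediction,
`B` revokes `A` and becomes marked, so that `C` cannot revoke `B` in turn: the algorithm ends with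
`{B}`. Only `B` is mispredicted, at a cost of `2 - 1`, which is exactly the loss `OPT - ALG`.
-/

namespace Ivl

theorem occ_nonempty (I : Ivl) : I.occ.Nonempty := Set.nonempty_Ico.2 I.lt

theorem occ_subset_iff {I J : Ivl} : I.occ ⊆ J.occ ↔ J.s ≤ I.s ∧ I.f ≤ J.f :=
  Set.Ico_subset_Ico_iff I.lt

end Ivl

section Conflict

variable {I J : Ivl}

theorem conflict_self (I : Ivl) : Conflict I I := by
  simpa only [Conflict, Set.inter_self] using I.occ_nonempty

theorem Conflict.symm (h : Conflict I J) : Conflict J I := by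
  rwa [Conflict, Set.inter_comm]

theorem ne_of_not_conflict (h : ¬ Conflict I J) : I ≠ J := by
  rintro rfl
  exact h (conflict_self I)

theorem conflict_iff : Conflict I J ↔ I.s < J.f ∧ J.s < I.f := by
  simp [Conflict, Ivl.occ, Set.Ico_inter_Ico, I.lt, J.lt, and_comm]

theorem PartialConflict.ne (h : PartialConflict I J) : I ≠ J := by
  rintro rfl
  exact h.2.1 subset_rfl

theorem PartialConflict.not_ssubset (h : PartialConflict I J) : ¬ I.occ ⊂ J.occ :=
  fun hIJ => h.2.1 hIJ.subset

theorem partialConflict_of_lt (hs : J.s < I.s) (hsf : I.s < J.f) (hf : J.f < I.f) :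
    PartialConflict I J :=
  ⟨conflict_iff.2 ⟨hsf, J.lt.trans hf⟩,
    fun hIJ => hf.not_ge (Ivl.occ_subset_iff.1 hIJ).2,
    fun hJI => hs.not_ge (Ivl.occ_subset_iff.1 hJI).1⟩

theorem exists_partialConflict_chain :
    ∃ A B C : Ivl, PartialConflict B A ∧ PartialConflict C B ∧ ¬ Conflict A C := by
  refine ⟨⟨0, 2, by norm_num⟩, ⟨1, 3, by norm_num⟩, ⟨2, 4, by norm_num⟩,
    partialConflict_of_lt ?_ ?_ ?_, partialConflict_of_lt ?_ ?_ ?_, ?_⟩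
  all_goals norm_num [conflict_iff]

end Conflict

section Optimum

theorem feasible_pair {I J : Ivl} (h : ¬ Conflict I J) : Feasible {I, J} := by
  have h' : ¬ Conflict J I := fun hJI => h hJI.symm
  simp [Feasible, h, h']

theorem isMaxCardOpt_of_length_le {inst : List Ivl} {opt : Finset Ivl}
    (hsub : ∀ I ∈ opt, I ∈ inst) (hopt : Feasible opt) (hinst : ¬ Feasible inst.toFinset)
    (hlen : inst.length ≤ opt.card + 1) : IsMaxCardOpt inst opt := by
  refine ⟨hsub, hopt, fun T hT hfeas => ?_⟩
  have hne : T ≠ inst.toFinset := fun h => hinst (h ▸ hfeas)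
  have hssub : T ⊂ inst.toFinset :=
    Finset.ssubset_iff_subset_ne.2 ⟨fun I hI => List.mem_toFinset.2 (hT I hI), hne⟩
  have hlt : T.card < inst.length :=
    (Finset.card_lt_card hssub).trans_le inst.toFinset_card_le
  omega

theorem isMaxCardOpt_pair {A B C : Ivl} (hBA : Conflict B A) (hne : B ≠ A)
    (hAC : ¬ Conflict A C) : IsMaxCardOpt [A, B, C] {A, C} := by
  have hne_AC : A ≠ C := ne_of_not_conflict hAC
  exact isMaxCardOpt_of_length_le (by simp) (feasible_pair hAC)
    (fun h => h B (by simp) A (by simp) hne hBA) (by simp [hne_AC])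

end Optimum

section Error

variable {w : Ivl → ℝ} {opt : Finset Ivl} {Prd : Ivl → Bool} {I : Ivl}

theorem err_eq_zero (h : Prd I = true ↔ I ∈ opt) : err w opt Prd I = 0 :=
  if_pos h

theorem err_eq_sum_sub (hPrd : Prd I = true) (hI : I ∉ opt) (h : ∀ J ∈ opt, Conflict J I) :
    err w opt Prd I = ∑ J ∈ opt, w J - w I := by
  simp only [err, hPrd, hI, true_iff, if_false, Finset.filter_true_of_mem h]

theorem totalErr_eq_add_sub {A B C : Ivl} (hBA : PartialConflict B A) (hCB : PartialConflict C B)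
    (hAC : A ≠ C) (hPA : Prd A = true) (hPB : Prd B = true) (hPC : Prd C = true) :
    totalErr w {A, C} Prd [A, B, C] = w A + w C - w B := by
  have hA : err w {A, C} Prd A = 0 := err_eq_zero (by simp [hPA])
  have hC : err w {A, C} Prd C = 0 := err_eq_zero (by simp [hPC])
  have hB : err w {A, C} Prd B = w A + w C - w B := by
    rw [err_eq_sum_sub hPB (by simp [hBA.ne, hCB.ne.symm]) (by simp [hBA.1.symm, hCB.1]),
      Finset.sum_pair hAC]
  simp [totalErr, hA, hB, hC]

end Error

section Algorithm

variable {Prd : Ivl → Bool} {S M : Finset Ivl} {I : Ivl}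

theorem revokeUnitStep_of_not_conflict (h : ∀ J ∈ S, ¬ Conflict I J) :
    revokeUnitStep Prd (S, M) I = (insert I S, M) :=
  if_pos (Finset.filter_false_of_mem h)

theorem revokeUnitStep_of_partialConflict (hne : ∃ J ∈ S, Conflict I J)
    (hpart : ∀ J ∈ S, Conflict I J → PartialConflict I J) (hPrd : Prd I = true)
    (hM : ∀ J ∈ S, Conflict I J → J ∉ M) :
    revokeUnitStep Prd (S, M) I = (insert I {J ∈ S | ¬ Conflict I J}, insert I M) := by
  have hconf : {J ∈ S | Conflict I J} ≠ ∅ := (Finset.filter_nonempty_iff.2 hne).ne_empty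
  have hincl : ¬ ∃ J, {J ∈ S | Conflict I J} = {J} ∧ I.occ ⊂ J.occ := by
    rintro ⟨J, hJ, hIJ⟩
    obtain ⟨hJS, hconfJ⟩ := Finset.mem_filter.1 (hJ ▸ Finset.mem_singleton_self J)
    exact (hpart J hJS hconfJ).not_ssubset hIJ
  have hunmarked : {J ∈ S | Conflict I J} ∩ M = ∅ :=
    Finset.disjoint_iff_inter_eq_empty.1 (Finset.disjoint_left.2 (by simpa using hM))
  have hrevoke : (∀ J ∈ ({J ∈ S | Conflict I J} : Finset Ivl), PartialConflict I J) ∧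
      Prd I = true ∧ {J ∈ S | Conflict I J} ∩ M = ∅ :=
    ⟨by simpa using hpart, hPrd, hunmarked⟩
  simp only [revokeUnitStep, if_neg hconf, if_neg hincl, if_pos hrevoke, Finset.filter_not]

theorem revokeUnitStep_of_marked (hincl : ∀ J ∈ S, ¬ I.occ ⊂ J.occ)
    (hM : ∃ J ∈ S, Conflict I J ∧ J ∈ M) : revokeUnitStep Prd (S, M) I = (S, M) := by
  have hmarked : ({J ∈ S | Conflict I J} ∩ M).Nonempty := by
    simpa [Finset.Nonempty, and_assoc] using hM
  have hincl' : ¬ ∃ J, {J ∈ S | Conflict I J} = {J} ∧ I.occ ⊂ J.occ := by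
    rintro ⟨J, hJ, hIJ⟩
    exact hincl J (Finset.filter_subset _ S (hJ ▸ Finset.mem_singleton_self J)) hIJ
  have hconf : {J ∈ S | Conflict I J} ≠ ∅ :=
    (hmarked.mono Finset.inter_subset_left).ne_empty
  simp only [revokeUnitStep, if_neg hconf, if_neg hincl', hmarked.ne_empty,
    and_false, if_false]

theorem revokeUnit_eq_singleton {A B C : Ivl} (hBA : PartialConflict B A)
    (hCB : PartialConflict C B) (hPrd : Prd B = true) : revokeUnit Prd [A, B, C] = {B} := by
  have hA : revokeUnitStep Prd (∅, ∅) A = ({A}, ∅) :=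
    revokeUnitStep_of_not_conflict (by simp)
  have hB : revokeUnitStep Prd ({A}, ∅) B = ({B}, {B}) := by
    rw [revokeUnitStep_of_partialConflict (by simpa using hBA.1) (by simpa using fun _ => hBA)
      hPrd (by simp)]
    simp [Finset.filter_singleton, hBA.1]
  have hC : revokeUnitStep Prd ({B}, {B}) C = ({B}, {B}) :=
    revokeUnitStep_of_marked (by simpa using hCB.not_ssubset) (by simpa using hCB.1)
  simp only [revokeUnit, List.foldl_cons, List.foldl_nil, hA, hB, hC]

end Algorithm

theorem revokeUnit_not_better_than_opt_sub_err :
    ∃ (inst : List Ivl) (Prd : Ivl → Bool) (opt : Finset Ivl),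
      inst.Nodup ∧ IsMaxCardOpt inst opt ∧
      0 < totalErr (fun _ => 1) opt Prd inst ∧
      ((revokeUnit Prd inst).card : ℝ) =
        (opt.card : ℝ) - totalErr (fun _ => 1) opt Prd inst := by
  obtain ⟨A, B, C, hBA, hCB, hAC⟩ := exists_partialConflict_chain
  have hne : A ≠ C := ne_of_not_conflict hAC
  have herr : totalErr (fun _ => 1) {A, C} (fun _ => true) [A, B, C] = 1 := by
    rw [totalErr_eq_add_sub hBA hCB hne rfl rfl rfl]
    norm_num
  refine ⟨[A, B, C], fun _ => true, {A, C}, ?_, isMaxCardOpt_pair hBA.1 hBA.ne hAC, ?_, ?_⟩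
  · simp [hBA.ne.symm, hne, hCB.ne.symm]
  · rw [herr]
    exact one_pos
  · rw [herr, revokeUnit_eq_singleton hBA hCB rfl, Finset.card_singleton, Finset.card_pair hne]
    norm_num
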